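/- Let R be a 2-dimensional complete Noetherian local normal domain containing an algebraically closed field of characteristic zero, and suppose R has an NCCR. Then any finitely generated reflexive R-module M giving an NCCR of R is an additive generator of the category of maximal Cohen–Macaulay R-modules: a finitely generated R-module N is maximal Cohen–Macaulay if and only if N ∈ add_R M. -/

import Mathlib

/-! The organising notion is `ExtendsFrom I N`: no nonzero element of `N` is killed by the ideal
`I`, and every linear map `I → N` is `a ↦ a • n` for some `n`. Equivalently `N → Hom(I, N)` is
bijective; homologically this is the vanishing of `Ext⁰(R/I, N)` and `Ext¹(R/I, N)`, so in
dimension two `IsMCM R N ↔ ExtendsFrom m N` for the maximal ideal `m` (`isMCM_iff_extendsFrom`).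
If `ExtendsFrom I N`, then a map to `N` from a submodule `L' ⊆ L` with `I L ⊆ L'` extends
to `L` (`ExtendsFrom.exists_extension`); this elementary statement replaces local cohomology.

Over a normal domain of dimension two `ExtendsFrom m R` holds by the classical
determinant trick, and it passes to reflexive modules, finite sums and direct summands; hence
every object of `add M` is maximal Cohen–Macaulay. Conversely a finite module `N` with
`ExtendsFrom m N` is torsion-free and reflexive, because it is free in codimension one
(`isReflexive_of_extendsFrom`).

It remains to see that a reflexive `N` lies in `add M` when `Λ = End_R(M)` has global dimension
two (this is the fibre at the maximal ideal of the NCCR condition). The kernel of a map between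
projective `Λ`-modules is then projective (`kernelsProjective_of_globalDimLE`). Let `J` be the
trace ideal of `M`. Again by normality `ExtendsFrom J R` holds, so `M` and `N` do not see
modules killed by `J`. Up to `J`-torsion `N` has a presentation `M^b → M^a → N → 0`, and applying
`Hom_R(-, M)` gives an exact sequence `0 → Hom_R(N, M) → Λ^a → Λ^b`; so `Hom_R(N, M)` is a finite
projective `Λ`-module (`projective_hom`). Moreover every `Λ`-linear map `Hom_R(N, M) → M` is
evaluation at a point of `N` (`exists_eval_eq`). Dualising a splitting of
`Λ^a → Hom_R(N, M)` into `M` therefore exhibits `N` as a direct summand of `M^a`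
(`memAdd_of_kernelsProjective`). Completeness and the coefficient field play no role in
this argument. -/



/- ## Preliminary definitions -/

open Module TensorProduct CategoryTheory

universe u

section Defs

variable (R : Type u) [CommRing R]

/-- `N ∈ add_R M` : `N` is isomorphic to a direct summand of a finite direct sum of
copies of `M`. -/
def MemAdd (M N : Type u) [AddCommGroup M] [Module R M] [AddCommGroup N] [Module R N] : Prop :=
  ∃ (k : ℕ) (P : ModuleCat.{u} R), Nonempty ((N × P) ≃ₗ[R] (Fin k → M))

/-- `M` is a generator, i.e. `R ∈ add_R M`. -/
def IsGeneratorModule (M : Type u) [AddCommGroup M] [Module R M] : Prop := MemAdd R M R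

/-- `M` is an indecomposable module: it is nonzero and admits no nontrivial
direct sum decomposition. -/
def IsIndecomposableModule (M : Type u) [AddCommGroup M] [Module R M] : Prop :=
  Nontrivial M ∧ ∀ A B : Submodule R M, IsCompl A B → A = ⊥ ∨ B = ⊥

/-- `M` is steady : `M` is a generator and `End_R(M) ∈ add_R M`. -/
def IsSteadyModule (M : Type u) [AddCommGroup M] [Module R M] : Prop :=
  IsGeneratorModule R M ∧ MemAdd R M (Module.End R M)

/-- The family `(M i)` (the indecomposable decomposition of `M = ⊕ i, M i`) is semi-steady:
`M` is a generator and, for each `i`, `Hom_R(M i, M) ∈ add_R M` or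
`Hom_R(M i, M) ∈ add_R M^*`. -/
def IsSemiSteadyFamily {m : ℕ} (M : Fin m → Type u) [∀ i, AddCommGroup (M i)]
    [∀ i, Module R (M i)] : Prop :=
  IsGeneratorModule R (∀ j, M j) ∧
  ∀ i, MemAdd R (∀ j, M j) (M i →ₗ[R] ∀ j, M j) ∨
       MemAdd R (Module.Dual R (∀ j, M j)) (M i →ₗ[R] ∀ j, M j)

/-- `M` has rank one: after tensoring with the fraction field of `R`, it becomes
one-dimensional. -/
def HasRankOne (M : Type u) [AddCommGroup M] [Module R M] : Prop :=
  Module.finrank (FractionRing R) (FractionRing R ⊗[R] M) = 1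

/-- A divisorial module: a finitely generated rank-one reflexive module. -/
def IsDivisorialModule (M : Type u) [AddCommGroup M] [Module R M] : Prop :=
  Module.Finite R M ∧ Module.IsReflexive R M ∧ HasRankOne R M

/-- The depth of a module over a (local) ring, defined as
`inf { i | Ext^i_R(R/m, M) ≠ 0 }`. -/
noncomputable def moduleDepth (hR : IsLocalRing R) (M : Type u) [AddCommGroup M]
    [Module R M] : ℕ∞ :=
  letI := hR
  sInf {i : ℕ∞ | ∃ k : ℕ, i = (k : ℕ∞) ∧
    ¬ Subsingleton ↥(((Ext R (ModuleCat.{u} R) k).obj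
        (Opposite.op (ModuleCat.of R (IsLocalRing.ResidueField R)))).obj (ModuleCat.of R M))}

/-- `M` is a maximal Cohen-Macaulay module over the local ring `R`:
its depth equals (i.e. is at least) the Krull dimension of `R`. -/
def IsMCM (M : Type u) [AddCommGroup M] [Module R M] : Prop :=
  ∀ hR : IsLocalRing R, ringKrullDim R ≤ (moduleDepth R hR M : WithBot ℕ∞)

end Defs

section GlobalDim

variable (Λ : Type u) [Ring Λ]

/-- The global dimension of the ring `Λ` is at most `d`, expressed via vanishing of
`Ext^{d+1}` on the category of `Λ`-modules. -/
def GlobalDimLE (d : ℕ) : Prop :=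
  ∀ M N : ModuleCat.{u} Λ,
    Subsingleton ↥(((Ext ℤ (ModuleCat.{u} Λ) (d + 1)).obj (Opposite.op M)).obj N)

/-- The global dimension of the ring `Λ`. -/
noncomputable def globalDim : ℕ∞ :=
  sInf {d : ℕ∞ | ∃ k : ℕ, d = (k : ℕ∞) ∧ GlobalDimLE Λ k}

end GlobalDim

section Order

variable (R : Type u) [CommRing R]

/-- `Λ` is a non-singular `R`-order: `Λ` is a module-finite `R`-algebra which is
maximal Cohen-Macaulay as an `R`-module, and `gl.dim Λ_p = dim R_p` for every
prime `p` of `R`. -/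
def IsNonsingularOrder (Λ : Type u) [Ring Λ] [Algebra R Λ] : Prop :=
  Module.Finite R Λ ∧ IsMCM R Λ ∧
  ∀ p : PrimeSpectrum R,
    (globalDim (Localization.AtPrime p.asIdeal ⊗[R] Λ) : WithBot ℕ∞) =
      ringKrullDim (Localization.AtPrime p.asIdeal)

/-- The nonzero finitely generated reflexive module `M` gives a non-commutative crepant
resolution (NCCR) of `R`, i.e. `End_R(M)` is a non-singular `R`-order. -/
def GivesNCCR (M : Type u) [AddCommGroup M] [Module R M] : Prop :=
  Module.Finite R M ∧ Module.IsReflexive R M ∧ Nontrivial M ∧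
  IsNonsingularOrder R (Module.End R M)

end Order

section NCCRExistence

variable (R : Type u) [CommRing R]

/-- `R` has an NCCR. -/
def HasNCCR : Prop := ∃ M : ModuleCat.{u} R, GivesNCCR R ↥M

/-- `R` has a steady NCCR. -/
def HasSteadyNCCR : Prop := ∃ M : ModuleCat.{u} R, GivesNCCR R ↥M ∧ IsSteadyModule R ↥M

/-- `R` has a semi-steady NCCR: a module with indecomposable decomposition
`⊕ i, M i` which is semi-steady and gives an NCCR. -/
def HasSemiSteadyNCCR : Prop :=
  ∃ (m : ℕ) (M : Fin m → ModuleCat.{u} R),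
    (∀ i, Module.Finite R ↥(M i)) ∧ (∀ i, IsIndecomposableModule R ↥(M i)) ∧
    GivesNCCR R (∀ i, ↥(M i)) ∧ IsSemiSteadyFamily R (fun i => ↥(M i))

/-- `R` is of finite Cohen-Macaulay representation type: there are only finitely many
isomorphism classes of indecomposable maximal Cohen-Macaulay `R`-modules. -/
def HasFiniteCMType : Prop :=
  ∃ (m : ℕ) (N : Fin m → ModuleCat.{u} R), ∀ L : ModuleCat.{u} R,
    Module.Finite R ↥L → IsIndecomposableModule R ↥L → IsMCM R ↥L →
      ∃ i, Nonempty (↥L ≃ₗ[R] ↥(N i))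

end NCCRExistence

/-! ### Extending linear maps from an ideal -/

section ExtendsFrom
variable {R : Type*} [CommRing R]

/-- The canonical map `N → Hom_R(I, N)` is bijective. It is stated elementwise: no nonzero
element of `N` is killed by `I`, and every linear map `I → N` is multiplication by an element
of `N`. -/
def ExtendsFrom (I : Ideal R) (N : Type*) [AddCommGroup N] [Module R N] : Prop :=
  (∀ n : N, (∀ a ∈ I, a • n = 0) → n = 0) ∧
  ∀ f : I →ₗ[R] N, ∃ n : N, ∀ a : I, f a = (a : R) • n

variable {N N' L : Type*} [AddCommGroup N] [Module R N] [AddCommGroup N'] [Module R N']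
  [AddCommGroup L] [Module R L]

/-- If the cokernel of the injection `ι` is killed by `I`, then maps into `N` extend along `ι`:
the value at `l` is the element `n` representing the map `I → N`, `a ↦ f (a • l)`. -/
theorem ExtendsFrom.exists_extension {I : Ideal R} (h : ExtendsFrom I N) (ι : N' →ₗ[R] L)
    (hι : Function.Injective ι) (hI : ∀ a ∈ I, ∀ l, a • l ∈ LinearMap.range ι) (f : N' →ₗ[R] N) :
    ∃ F : L →ₗ[R] N, F ∘ₗ ι = f := by
  obtain ⟨h1, h2⟩ := h
  let e := LinearEquiv.ofInjective ι hι
  have key : ∀ l : L, ∃ n : N, ∀ a ∈ I, ∀ x, ι x = a • l → f x = a • n := by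
    intro l
    let g : I →ₗ[R] N := f ∘ₗ e.symm.toLinearMap ∘ₗ
      LinearMap.codRestrict (LinearMap.range ι) ((LinearMap.toSpanSingleton R L l) ∘ₗ I.subtype)
        (fun a => by simpa using hI a a.2 l)
    obtain ⟨n, hn⟩ := h2 g
    refine ⟨n, fun a ha x hx => ?_⟩
    rw [← hn ⟨a, ha⟩]
    simp only [g, LinearMap.comp_apply, LinearEquiv.coe_coe]
    congr 1
    rw [LinearEquiv.eq_symm_apply]
    ext
    simpa [e] using hx
  choose F hF using key
  have uniq : ∀ l n, (∀ a ∈ I, ∀ x, ι x = a • l → f x = a • n) → F l = n := by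
    intro l n hn
    rw [← sub_eq_zero]
    refine h1 _ fun a ha => ?_
    obtain ⟨x, hx⟩ := hI a ha l
    rw [smul_sub, ← hF l a ha x hx, ← hn a ha x hx, sub_self]
  refine ⟨{ toFun := F, map_add' := fun l l' => ?_, map_smul' := fun r l => ?_ }, ?_⟩
  · refine uniq _ _ fun a ha z hz => ?_
    obtain ⟨x, hx⟩ := hI a ha l
    obtain ⟨y, hy⟩ := hI a ha l'
    rw [smul_add, ← hF l a ha x hx, ← hF l' a ha y hy, ← map_add]
    congr 1
    apply hι
    rw [hz, map_add, hx, hy, smul_add]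
  · refine uniq _ _ fun a ha z hz => ?_
    obtain ⟨x, hx⟩ := hI a ha l
    rw [RingHom.id_apply, smul_comm, ← hF l a ha x hx, ← map_smul]
    congr 1
    apply hι
    rw [hz, map_smul, hx, smul_comm]
  · ext n
    refine uniq _ _ fun a ha z hz => ?_
    rw [← map_smul]
    congr 1
    apply hι
    rw [hz, map_smul]

theorem ExtendsFrom.mono {I J : Ideal R} (h : ExtendsFrom I N) (hIJ : I ≤ J) :
    ExtendsFrom J N := by
  refine ⟨fun n hn => h.1 n fun a ha => hn a (hIJ ha), fun f => ?_⟩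
  obtain ⟨n, hn⟩ := h.2 (f ∘ₗ Submodule.inclusion hIJ)
  refine ⟨n, fun b => ?_⟩
  rw [← sub_eq_zero]
  refine h.1 _ fun a ha => ?_
  rw [smul_sub, ← map_smul, sub_eq_zero]
  have := hn ⟨b * a, I.mul_mem_left _ ha⟩
  simp only [LinearMap.comp_apply] at this
  rw [smul_smul, mul_comm, ← this]
  congr 1; ext; simp [mul_comm]

theorem ExtendsFrom.mul {I J : Ideal R} (hI : ExtendsFrom I N) (hJ : ExtendsFrom J N) :
    ExtendsFrom (I * J) N := by
  refine ⟨fun n hn => hI.1 n fun a ha => hJ.1 _ fun b hb => ?_, fun f => ?_⟩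
  · rw [smul_smul, mul_comm]; exact hn _ (Ideal.mul_mem_mul ha hb)
  · obtain ⟨F, hF⟩ := hI.exists_extension (Submodule.inclusion (Ideal.mul_le_right : I * J ≤ J))
      (Submodule.inclusion_injective _) (fun a ha l => by
        rw [Submodule.range_inclusion]; exact Ideal.mul_mem_mul ha l.2) f
    obtain ⟨n, hn⟩ := hJ.2 F
    refine ⟨n, fun a => ?_⟩
    rw [← hF, LinearMap.comp_apply, hn]; rfl

theorem ExtendsFrom.pow {I : Ideal R} (hI : ExtendsFrom I N) (t : ℕ) :
    ExtendsFrom (I ^ t) N := by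
  induction t with
  | zero =>
    rw [pow_zero, Ideal.one_eq_top]
    exact ⟨fun n hn => by simpa using hn 1 trivial, fun f => ⟨f ⟨1, trivial⟩, fun a => by
      rw [← map_smul]; congr 1; ext; simp⟩⟩
  | succ t ih => rw [pow_succ]; exact ih.mul hI

theorem ExtendsFrom.of_retract {I : Ideal R} (h : ExtendsFrom I N) (i : N' →ₗ[R] N)
    (r : N →ₗ[R] N') (hri : ∀ x, r (i x) = x) : ExtendsFrom I N' := by
  refine ⟨fun n hn => ?_, fun f => ?_⟩
  · rw [← hri n, h.1 (i n) fun a ha => by rw [← map_smul, hn a ha, map_zero], map_zero]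
  · obtain ⟨n, hn⟩ := h.2 (i ∘ₗ f)
    refine ⟨r n, fun a => ?_⟩
    rw [← map_smul, ← hn, LinearMap.comp_apply, hri]

theorem ExtendsFrom.pi {ι : Type*} {I : Ideal R} (h : ExtendsFrom I N) :
    ExtendsFrom I (ι → N) := by
  refine ⟨fun n hn => ?_, fun f => ?_⟩
  · ext i; exact h.1 _ fun a ha => congrFun (hn a ha) i
  · choose n hn using fun i => h.2 (LinearMap.proj i ∘ₗ f)
    exact ⟨n, fun a => by ext i; exact hn i a⟩

/-- A reflexive module is a second dual; so the element representing `I → N` is found by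
representing its composite with each functional. -/
theorem ExtendsFrom.of_isReflexive {I : Ideal R} (h : ExtendsFrom I R) [IsReflexive R N] :
    ExtendsFrom I N := by
  refine ⟨fun n hn => ?_, fun f => ?_⟩
  · apply (bijective_dual_eval R N).1
    ext g
    simpa using h.1 (g n) fun a ha => by rw [← map_smul, hn a ha, map_zero]
  · choose x hx using fun g : Dual R N => h.2 (g ∘ₗ f)
    have uniq : ∀ g r, (∀ a : I, g (f a) = (a : R) • r) → x g = r := by
      intro g r hr
      rw [← sub_eq_zero]
      refine h.1 _ fun a ha => ?_
      rw [smul_sub, ← hx g ⟨a, ha⟩, ← hr ⟨a, ha⟩, LinearMap.comp_apply, sub_self]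
    let φ : Dual R (Dual R N) :=
      { toFun := x
        map_add' := fun g g' => uniq _ _ fun a => by
          rw [smul_add, ← hx, ← hx]; simp
        map_smul' := fun r g => uniq _ _ fun a => by
          rw [RingHom.id_apply, smul_comm, ← hx]; simp }
    obtain ⟨n, hn⟩ := (bijective_dual_eval R N).2 φ
    refine ⟨n, fun a => (bijective_dual_eval R N).1 ?_⟩
    ext g
    rw [map_smul, hn]
    exact hx g a
end ExtendsFrom

/-! ### Normality: the trace ideal and the maximal ideal -/

section Normal
variable {R : Type*} [CommRing R] [IsDomain R]

/-- The trace ideal of `M`: the ideal generated by the values of all functionals on `M`. -/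
def traceIdeal (R : Type*) [CommRing R] (M : Type*) [AddCommGroup M] [Module R M] : Ideal R :=
  Ideal.span {a | ∃ (g : Dual R M) (m : M), g m = a}

/-- A linear map from a nonzero ideal to the domain `R` is multiplication by a fraction. -/
theorem algebraMap_apply_eq_mul {I : Ideal R} {b : R} (hb : b ∈ I) (hb0 : b ≠ 0)
    (f : I →ₗ[R] R) (a : I) :
    algebraMap R (FractionRing R) (f a) =
      (algebraMap R (FractionRing R) (f ⟨b, hb⟩) / algebraMap R (FractionRing R) b) *
        algebraMap R (FractionRing R) a := by
  have hb' : algebraMap R (FractionRing R) b ≠ 0 := by simpa using hb0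
  have : b • f a = (a : R) • f ⟨b, hb⟩ := by
    rw [← map_smul, ← map_smul]; congr 1; ext; simp [mul_comm]
  field_simp
  rw [← map_mul, ← map_mul]
  congr 1
  simpa [mul_comm] using this

/-- For a nonzero ideal `I` of a domain, `ExtendsFrom I R` says `R = (R : I)` inside the fraction
field. -/
theorem extendsFrom_self_of_forall {I : Ideal R} (hI : I ≠ ⊥)
    (h : ∀ x : FractionRing R, (∀ a ∈ I, ∃ r, algebraMap R _ r = x * algebraMap R _ a) →
      ∃ r, algebraMap R _ r = x) : ExtendsFrom I R := by
  obtain ⟨b, hb, hb0⟩ := Submodule.exists_mem_ne_zero_of_ne_bot hI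
  refine ⟨fun n hn => ?_, fun f => ?_⟩
  · simpa [hb0] using hn b hb
  · obtain ⟨r, hr⟩ := h _ (fun a ha => ⟨f ⟨a, ha⟩, algebraMap_apply_eq_mul hb hb0 f ⟨a, ha⟩⟩)
    refine ⟨r, fun a => ?_⟩
    apply IsFractionRing.injective R (FractionRing R)
    rw [algebraMap_apply_eq_mul hb hb0 f a, ← hr, smul_eq_mul, mul_comm, map_mul]

variable [IsIntegrallyClosed R] [IsNoetherianRing R]

/-- If a fraction `x` multiplies the trace ideal of `M` into `R`, then `x` maps the dual of `M`
into itself, so `x` is integral over `R` by the determinant trick. -/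
theorem extendsFrom_traceIdeal (M : Type*) [AddCommGroup M] [Module R M] [Module.Finite R M]
    [IsReflexive R M] [Nontrivial M] : traceIdeal R M ≠ ⊥ ∧ ExtendsFrom (traceIdeal R M) R := by
  have hne : traceIdeal R M ≠ ⊥ := by
    intro h
    obtain ⟨m, hm⟩ := exists_ne (0 : M)
    apply hm
    apply (bijective_dual_eval R M).1
    ext g
    have : g m ∈ traceIdeal R M := Ideal.subset_span ⟨g, m, rfl⟩
    rw [h] at this
    simpa using this
  refine ⟨hne, extendsFrom_self_of_forall hne fun x hx => ?_⟩
  let K := FractionRing R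
  -- the image of `M*` in `Hom(M, K)`
  let Φ : Dual R M →ₗ[R] (M → K) :=
    { toFun := fun g m => algebraMap R K (g m)
      map_add' := fun g g' => by ext; simp
      map_smul' := fun r g => by ext; simp [Algebra.smul_def] }
  have hint : IsIntegral R x := by
    refine isIntegral_of_smul_mem_submodule (M := M → K) (LinearMap.range Φ) ?_ ?_ x ?_
    · intro hbot
      apply hne
      rw [traceIdeal, Ideal.span_eq_bot]
      rintro _ ⟨g, m, rfl⟩
      have : Φ g ∈ LinearMap.range Φ := ⟨g, rfl⟩
      rw [hbot] at this
      have := congrFun ((Submodule.mem_bot R).1 this) m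
      simpa [Φ] using this
    · rw [← Submodule.fg_top, ← Module.finite_def]; infer_instance
    · rintro _ ⟨g, rfl⟩
      choose y hy using fun m => hx (g m) (Ideal.subset_span ⟨g, m, rfl⟩)
      have inj := IsFractionRing.injective R K
      refine ⟨{ toFun := y, map_add' := fun m m' => inj ?_, map_smul' := fun r m => inj ?_ }, ?_⟩
      · rw [map_add, hy, hy, hy]; simp [mul_add]
      · rw [RingHom.id_apply, smul_eq_mul, map_mul, hy, hy]; simp; ring
      · ext m; exact hy m
  exact IsIntegrallyClosed.algebraMap_eq_of_integral hint

open IsLocalRing in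
/-- Suppose `x • m ⊆ R`. If `x • m ⊆ m`, then `x` is integral over `R`; otherwise `m` is principal,
and Krull's height theorem contradicts `dim R = 2`. -/
theorem extendsFrom_maximalIdeal [IsLocalRing R] (hdim : ringKrullDim R = 2) :
    ExtendsFrom (maximalIdeal R) R := by
  have hht : (maximalIdeal R).height = 2 := by
    have := maximalIdeal_height_eq_ringKrullDim (R := R)
    rw [hdim] at this; exact WithBot.coe_injective this
  have hne : maximalIdeal R ≠ ⊥ := by
    intro h; rw [h] at hht; simp at hht
  refine extendsFrom_self_of_forall hne fun x hx => ?_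
  have inj := IsFractionRing.injective R (FractionRing R)
  choose! f hf using hx
  by_cases hm : ∀ a ∈ maximalIdeal R, f a ∈ maximalIdeal R
  · refine IsIntegrallyClosed.algebraMap_eq_of_integral
      (isIntegral_of_smul_mem_submodule (M := FractionRing R)
        (Submodule.map (Algebra.linearMap R (FractionRing R)) (maximalIdeal R)) ?_ ?_ x ?_)
    · intro h
      apply hne
      rw [eq_bot_iff]
      intro a ha
      have : Algebra.linearMap R (FractionRing R) a ∈ (⊥ : Submodule R (FractionRing R)) :=
        h ▸ Submodule.mem_map_of_mem ha
      simpa using this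
    · exact Submodule.FG.map _ (IsNoetherian.noetherian _)
    · rintro _ ⟨a, ha, rfl⟩
      exact ⟨f a, hm a ha, hf a ha⟩
  · push Not at hm
    obtain ⟨a, ha, hfa⟩ := hm
    exfalso
    have hu : IsUnit (f a) := by simpa using hfa
    have : maximalIdeal R = Ideal.span {a} := by
      apply le_antisymm
      · intro b hb
        rw [Ideal.mem_span_singleton]
        have : f a * b = f b * a := by
          apply inj
          rw [map_mul, map_mul, hf a ha, hf b hb]; ring
        rw [← hu.dvd_mul_left, this]
        exact Dvd.intro_left _ rfl
      · rwa [Ideal.span_singleton_le_iff_mem]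
    have h1 : (maximalIdeal R).height ≤ 1 := by
      have : (maximalIdeal R).IsPrincipal := ⟨a, this⟩
      refine Ideal.height_le_one_of_isPrincipal_of_mem_minimalPrimes (maximalIdeal R) _ ?_
      rw [Ideal.minimalPrimes_eq_subsingleton_self]; rfl
    rw [hht] at h1
    exact absurd h1 (by norm_num)
end Normal

/-! ### Modules extending from the maximal ideal are reflexive -/

section Reflexive
open IsLocalRing
variable {R : Type*} [CommRing R] [IsDomain R] [IsNoetherianRing R] [IsLocalRing R]

omit [IsNoetherianRing R] in
theorem eq_maximalIdeal_of_lt (hdim : ringKrullDim R = 2) (p q : Ideal R) [p.IsPrime] [q.IsPrime]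
    (hp : p ≠ ⊥) (hpq : p < q) : q = maximalIdeal R := by
  have hht : (maximalIdeal R).height = 2 := by
    have := maximalIdeal_height_eq_ringKrullDim (R := R)
    rw [hdim] at this; exact WithBot.coe_injective this
  by_contra hq
  have h1 := Ideal.height_add_one_le_of_lt_of_isPrime (bot_lt_iff_ne_bot.2 hp)
  have h2 := Ideal.height_add_one_le_of_lt_of_isPrime hpq
  have h3 := Ideal.height_add_one_le_of_lt_of_isPrime
    (lt_of_le_of_ne (le_maximalIdeal (Ideal.IsPrime.ne_top ‹q.IsPrime›)) hq)
  rw [hht] at h3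
  have : (0 : ℕ∞) + 1 + 1 + 1 ≤ 2 := by
    refine le_trans ?_ h3
    gcongr
    refine le_trans ?_ h2
    gcongr
    refine le_trans ?_ h1
    gcongr
    simp
  exact absurd this (by decide)

omit [IsDomain R] in
theorem exists_pow_le (I : Ideal R) (h : ∀ p : Ideal R, p.IsPrime → I ≤ p → p = maximalIdeal R) :
    ∃ t, maximalIdeal R ^ t ≤ I := by
  apply Ideal.exists_pow_le_of_le_radical_of_fg _ (IsNoetherian.noetherian _)
  rw [Ideal.radical_eq_sInf]
  refine le_sInf fun p hp => ?_
  rw [h p hp.2 hp.1]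

variable {N : Type*} [AddCommGroup N] [Module R N] [Module.Finite R N]

/-- A nonzero torsion element produces an associated prime `p` of height one. For `y ∈ m \ p`, the
ideal `p + (y)` is `m`-primary, and extending maps along multiplication by `y` on `R/p` shows that
the `p`-torsion submodule `S` of `N` satisfies `S = y S`; so `S = 0` by Nakayama. -/
theorem isTorsionFree_of_extendsFrom (hdim : ringKrullDim R = 2)
    (hN : ExtendsFrom (maximalIdeal R) N) : IsTorsionFree R N := by
  suffices H : ∀ (r : R) (n : N), r • n = 0 → r = 0 ∨ n = 0 by
    exact Module.isTorsionFree_iff_smul_eq_zero.2 fun r n => H r n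
  intro r n hrn
  by_contra! hcon
  obtain ⟨hr, hn⟩ := hcon
  -- an associated prime `p` of the submodule generated by `n`
  obtain ⟨p, hp, hle⟩ := exists_le_isAssociatedPrime_of_isNoetherianRing R n hn
  obtain ⟨hpp, x, hx⟩ := isAssociatedPrime_iff.1 hp
  have hpx : ∀ a, a ∈ p ↔ a • x = 0 := fun a => by rw [hx, Submodule.mem_colon_singleton]; rfl
  have hx0 : x ≠ 0 := by
    rintro rfl
    exact hpp.ne_top ((Ideal.eq_top_iff_one _).2 ((hpx 1).2 (by simp)))
  have hp0 : p ≠ ⊥ := by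
    rintro rfl
    exact hr (by simpa using hle (Submodule.mem_colon_singleton.2 (by simpa using hrn)))
  have hpm : p ≠ maximalIdeal R := by
    rintro rfl
    exact hx0 (hN.1 x fun a ha => (hpx a).1 ha)
  have hlt : p < maximalIdeal R := lt_of_le_of_ne (le_maximalIdeal hpp.ne_top) hpm
  obtain ⟨y, hym, hyp⟩ := SetLike.exists_of_lt hlt
  obtain ⟨t, ht⟩ := exists_pow_le (p ⊔ Ideal.span {y}) fun q hq hle => by
    refine eq_maximalIdeal_of_lt hdim p q hp0 (lt_of_le_of_ne (le_sup_left.trans hle) ?_)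
    rintro rfl
    exact hyp (hle (Ideal.mem_sup_right (Ideal.mem_span_singleton_self y)))
  have hI : ExtendsFrom (p ⊔ Ideal.span {y}) N := (hN.pow t).mono ht
  -- `S ≃ Hom(R/p, N)`, and `y` acts surjectively on it
  let S := Submodule.torsionBySet R N (p : Set R)
  have hS : S ≤ maximalIdeal R • S := by
    intro z hz
    rw [Submodule.mem_torsionBySet_iff] at hz
    let ι : (R ⧸ p) →ₗ[R] (R ⧸ p) := LinearMap.lsmul R (R ⧸ p) y
    let f : (R ⧸ p) →ₗ[R] N := Submodule.liftQ p (LinearMap.toSpanSingleton R N z)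
      (fun a ha => by simpa using hz ⟨a, ha⟩)
    obtain ⟨F, hF⟩ := hI.exists_extension ι (by
      rw [← LinearMap.ker_eq_bot, eq_bot_iff]
      intro w hw
      obtain ⟨w, rfl⟩ := Ideal.Quotient.mk_surjective w
      have : Ideal.Quotient.mk p (y * w) = 0 := hw
      rw [Ideal.Quotient.eq_zero_iff_mem] at this
      have := (hpp.mem_or_mem this).resolve_left hyp
      rwa [← Ideal.Quotient.eq_zero_iff_mem] at this) (by
      intro a ha l
      obtain ⟨b, hb, c, hc, rfl⟩ := Submodule.mem_sup.1 ha
      obtain ⟨c, rfl⟩ := Ideal.mem_span_singleton'.1 hc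
      obtain ⟨l, rfl⟩ := Ideal.Quotient.mk_surjective l
      refine ⟨Ideal.Quotient.mk p (c * l), ?_⟩
      change Ideal.Quotient.mk p (y * (c * l)) = Ideal.Quotient.mk p ((b + c * y) * l)
      rw [Ideal.Quotient.eq]
      have : y * (c * l) - (b + c * y) * l = -(l * b) := by ring
      rw [this]
      exact p.neg_mem (p.mul_mem_left _ hb)) f
    have h1 : y • F (Ideal.Quotient.mk p 1) = z := by
      rw [← map_smul]
      have := LinearMap.congr_fun hF (Ideal.Quotient.mk p 1)
      refine this.trans ?_
      change (1 : R) • z = z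
      simp
    rw [← h1]
    refine Submodule.smul_mem_smul hym ?_
    rw [Submodule.mem_torsionBySet_iff]
    intro a
    rw [← map_smul]
    have : (a : R) • Ideal.Quotient.mk p 1 = 0 := by
      change Ideal.Quotient.mk p (a * 1) = 0
      rw [mul_one, Ideal.Quotient.eq_zero_iff_mem]; exact a.2
    rw [this, map_zero]
  have hbot := Submodule.eq_bot_of_le_smul_of_le_jacobson_bot _ S (IsNoetherian.noetherian _) hS
    (by rw [IsLocalRing.jacobson_eq_maximalIdeal _ bot_ne_top])
  have hxS : x ∈ S := by
    rw [Submodule.mem_torsionBySet_iff]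
    exact fun a => (hpx a).1 a.2
  rw [hbot] at hxS
  exact hx0 hxS

variable [IsIntegrallyClosed R]

/-- A torsion-free module is free at a prime `p ≠ m`, since `R_p` is then a principal ideal domain.
Clearing denominators, multiplication by some `s ∉ p` on `N` factors through a free module. -/
theorem exists_smul_factors (hdim : ringKrullDim R = 2) [IsTorsionFree R N]
    (p : Ideal R) [p.IsPrime] (hp : p ≠ maximalIdeal R) :
    ∃ s ∉ p, ∃ (a : ℕ) (i : N →ₗ[R] (Fin a → R)) (π : (Fin a → R) →ₗ[R] N),
      ∀ n, π (i n) = s • n := by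
  let A := Localization.AtPrime p
  have hinj := IsLocalization.injective A p.primeCompl_le_nonZeroDivisors
  have : IsIntegrallyClosed A :=
    isIntegrallyClosed_of_isLocalization A p.primeCompl p.primeCompl_le_nonZeroDivisors
  have hPID : IsPrincipalIdealRing A := by
    have htfae := (tfae_of_isNoetherianRing_of_isLocalRing_of_isDomain A).out 0 3
    refine htfae.2 ⟨inferInstance, fun P hP _ => ?_⟩
    by_contra hPm
    have h1 : P.under R ≠ ⊥ := by
      intro h
      apply hP
      rw [← IsLocalization.map_under p.primeCompl A P, h, Ideal.map_bot]
    have h2 : P.under R ≤ p := by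
      refine le_trans (Ideal.comap_mono (le_maximalIdeal (Ideal.IsPrime.ne_top ‹_›))) ?_
      exact (IsLocalization.AtPrime.under_maximalIdeal A p).le
    have h3 : P.under R ≠ p := by
      intro h
      apply hPm
      rw [← IsLocalization.map_under p.primeCompl A P, h, Localization.AtPrime.map_eq_maximalIdeal]
    exact hp (eq_maximalIdeal_of_lt hdim _ p h1 (lt_of_le_of_ne h2 h3))
  let Np := LocalizedModule p.primeCompl N
  have hfree : Module.Free A Np := inferInstance
  obtain ⟨a, π, hπ⟩ := Module.Finite.exists_fin' R N
  let F := LocalizedModule p.primeCompl (Fin a → R)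
  let fN := LocalizedModule.mkLinearMap p.primeCompl N
  let fF := LocalizedModule.mkLinearMap p.primeCompl (Fin a → R)
  let πp : F →ₗ[A] Np := LocalizedModule.map p.primeCompl π
  have hπp : Function.Surjective πp := LocalizedModule.map_surjective p.primeCompl π hπ
  obtain ⟨σ, hσ⟩ := Module.projective_lifting_property πp LinearMap.id hπp
  have := Module.finitePresentation_of_finite R N
  obtain ⟨h, s, hs⟩ := Module.FinitePresentation.exists_lift_of_isLocalizedModule p.primeCompl fF
    ((σ.restrictScalars R) ∘ₗ fN)
  refine ⟨s, s.2, a, h, π, fun n => ?_⟩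
  have inj : Function.Injective fN := by
    rw [injective_iff_map_eq_zero]
    intro z hz
    obtain ⟨c, hc⟩ := (IsLocalizedModule.eq_zero_iff p.primeCompl fN).1 hz
    have hc0 : (c : R) ≠ 0 := fun h0 => c.2 (h0 ▸ p.zero_mem)
    exact (smul_eq_zero.1 hc).resolve_left hc0
  apply inj
  have h1 : fN (π (h n)) = πp (fF (h n)) := by
    exact (LocalizedModule.map_mk _ π (h n) 1).symm
  have h2 := LinearMap.congr_fun hs n
  have h3 := LinearMap.congr_fun hσ (fN n)
  simp only [LinearMap.comp_apply, LinearMap.id_apply] at h2 h3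
  rw [h1, h2, map_smul]
  exact ((πp.restrictScalars R).map_smul (s : R) (σ (fN n))).trans (congrArg ((s : R) • ·) h3)

/-- By `exists_smul_factors` the map `N → N**` is injective, and its cokernel is killed by a power
of `m`. Hence the identity of `N` extends to a retraction `N** → N`, and torsion-freeness of `N**`
forces the cokernel to vanish. -/
theorem isReflexive_of_extendsFrom (hdim : ringKrullDim R = 2)
    (hN : ExtendsFrom (maximalIdeal R) N) : IsReflexive R N := by
  have := isTorsionFree_of_extendsFrom hdim hN
  have hne : (⊥ : Ideal R) ≠ maximalIdeal R := by
    intro h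
    have := maximalIdeal_height_eq_ringKrullDim (R := R)
    rw [hdim, ← h, Ideal.height_bot] at this
    exact absurd (WithBot.coe_injective this : (0 : ℕ∞) = 2) (by decide)
  -- if `s` factors through a free module on `N`, then `s` kills the cokernel of `N → N**`
  have key : ∀ (s : R) (a : ℕ) (i : N →ₗ[R] (Fin a → R)) (π : (Fin a → R) →ₗ[R] N),
      (∀ n, π (i n) = s • n) → ∀ φ, s • φ ∈ LinearMap.range (Dual.eval R N) := by
    intro s a i π h φ
    refine ⟨π fun j => φ (LinearMap.proj j ∘ₗ i), ?_⟩
    ext g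
    have hg : s • g = ∑ j, g (π fun k => if j = k then 1 else 0) • (LinearMap.proj j ∘ₗ i) := by
      ext n
      rw [LinearMap.smul_apply, ← map_smul, ← h, LinearMap.pi_apply_eq_sum_univ π (i n)]
      simp [mul_comm]
    rw [LinearMap.smul_apply, ← map_smul, hg, LinearMap.pi_apply_eq_sum_univ π]
    simp [mul_comm]
  obtain ⟨s₀, hs₀, a₀, i₀, π₀, h₀⟩ := exists_smul_factors (N := N) hdim ⊥ hne
  replace hs₀ : s₀ ≠ 0 := by simpa using hs₀
  have inj : Function.Injective (Dual.eval R N) := by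
    rw [injective_iff_map_eq_zero]
    intro n hn
    have : i₀ n = 0 := by
      ext j
      exact LinearMap.congr_fun hn (LinearMap.proj j ∘ₗ i₀)
    have h1 := h₀ n
    rw [this, map_zero] at h1
    exact (smul_eq_zero.1 h1.symm).resolve_left hs₀
  refine ⟨inj, fun φ => ?_⟩
  obtain ⟨t, ht⟩ := exists_pow_le ((LinearMap.range (Dual.eval R N)).colon Set.univ)
    fun p hp hle => by
      by_contra hpm
      obtain ⟨s, hs, a, i, π, h⟩ := exists_smul_factors (N := N) hdim p hpm
      exact hs (hle (Submodule.mem_colon.2 fun φ _ => key s a i π h φ))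
  obtain ⟨F, hF⟩ := ((hN.pow t).mono ht).exists_extension (Dual.eval R N) inj
    (fun a ha φ => Submodule.mem_colon.1 ha φ trivial) LinearMap.id
  obtain ⟨n, hn⟩ := key s₀ a₀ i₀ π₀ h₀ φ
  refine ⟨F φ, ?_⟩
  have h1 : s₀ • Dual.eval R N (F φ) = s₀ • φ := by
    rw [← map_smul, ← map_smul, ← hn]
    congr 1
    exact LinearMap.congr_fun hF n
  exact smul_right_injective _ hs₀ h1

end Reflexive

/-! ### Reflexive modules and the endomorphism ring of `M` -/

section Main
variable {R : Type u} [CommRing R] [IsDomain R]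
variable {M N : Type u} [AddCommGroup M] [Module R M] [AddCommGroup N] [Module R N]

/-- The kernel of any linear map between projective `Λ`-modules (of the universe of `Λ`) is
projective. The kernel is given as a module with an injection that is exact with the map. -/
def KernelsProjective (Λ : Type u) [Ring Λ] : Prop :=
  ∀ (X P₀ P₁ : Type u) [AddCommGroup X] [Module Λ X] [AddCommGroup P₀] [Module Λ P₀]
    [AddCommGroup P₁] [Module Λ P₁] (i : X →ₗ[Λ] P₀) (d : P₀ →ₗ[Λ] P₁),
    Module.Projective Λ P₀ → Module.Projective Λ P₁ → Function.Injective i →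
    Function.Exact i d → Module.Projective Λ X

omit [IsDomain R] in
theorem lsum_single (a : ℕ) (s : Fin a → M →ₗ[R] N) (j : Fin a) (m : M) :
    LinearMap.lsum R (fun _ => M) R s (Pi.single j m) = s j m := by
  rw [LinearMap.lsum_apply, LinearMap.sum_apply, Finset.sum_eq_single j]
  · simp
  · intro b _ hb; simp [hb]
  · simp

omit [IsDomain R] in
/-- Maps into `M` are determined on a submodule whose cokernel is killed by `J`. -/
theorem eq_of_comp_eq {J : Ideal R} (hJ : ExtendsFrom J M) {N' : Type*} [AddCommGroup N']
    [Module R N'] (π : N' →ₗ[R] N) (hπ : ∀ a ∈ J, ∀ n, a • n ∈ LinearMap.range π)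
    {f g : N →ₗ[R] M} (h : f ∘ₗ π = g ∘ₗ π) : f = g := by
  ext n
  rw [← sub_eq_zero]
  refine hJ.1 _ fun a ha => ?_
  obtain ⟨x, hx⟩ := hπ a ha n
  rw [smul_sub, ← map_smul, ← map_smul, ← hx, sub_eq_zero]
  exact LinearMap.congr_fun h x

omit [IsDomain R] in
/-- Taking generators of `Hom_R(M, N)` gives a map `M^a → N` whose cokernel is killed by the trace
ideal: for `c = g m` and `n ∈ N`, the element `c • n` is the image of `m` under
`x ↦ g x • n`. -/
theorem exists_approximation (M N : Type u) [AddCommGroup M] [Module R M] [AddCommGroup N]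
    [Module R N] [IsNoetherianRing R] [Module.Finite R M] [Module.Finite R N] :
    ∃ (a : ℕ) (π : (Fin a → M) →ₗ[R] N), ∀ c ∈ traceIdeal R M, ∀ n, c • n ∈ LinearMap.range π := by
  obtain ⟨a, s, hs⟩ := Module.Finite.exists_fin (R := R) (M := M →ₗ[R] N)
  let π : (Fin a → M) →ₗ[R] N := LinearMap.lsum R (fun _ => M) R s
  have hπ : ∀ f : M →ₗ[R] N, LinearMap.range f ≤ LinearMap.range π := by
    intro f
    have : f ∈ Submodule.span R (Set.range s) := hs ▸ trivial
    induction this using Submodule.span_induction with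
    | mem x hx =>
      obtain ⟨j, rfl⟩ := hx
      rintro _ ⟨m, rfl⟩
      exact ⟨Pi.single j m, lsum_single a s j m⟩
    | zero => simp
    | add x y _ _ hx hy =>
      rintro _ ⟨m, rfl⟩
      exact Submodule.add_mem _ (hx ⟨m, rfl⟩) (hy ⟨m, rfl⟩)
    | smul r x _ hx =>
      rintro _ ⟨m, rfl⟩
      exact Submodule.smul_mem _ _ (hx ⟨m, rfl⟩)
  refine ⟨a, π, fun c hc n => ?_⟩
  have : traceIdeal R M ≤ (LinearMap.range π).comap (LinearMap.toSpanSingleton R N n) := by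
    refine Ideal.span_le.2 ?_
    rintro _ ⟨g, m, rfl⟩
    exact hπ (LinearMap.toSpanSingleton R N n ∘ₗ g) ⟨m, rfl⟩
  exact this hc

omit [IsDomain R] in
/-- An approximate presentation `M^b → M^a → N`, with cokernel and homology killed by the trace
ideal, gives an exact sequence `0 → Hom(N, M) → Λ^a → Λ^b` for `Λ = End_R(M)`. -/
theorem projective_hom [IsNoetherianRing R] [Module.Finite R M] [Module.Finite R N]
    (hJ : ExtendsFrom (traceIdeal R M) M) (hΛ : KernelsProjective (Module.End R M)) :
    Module.Projective (Module.End R M) (N →ₗ[R] M) := by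
  obtain ⟨a, π, hπ⟩ := exists_approximation (R := R) M N
  obtain ⟨b, ρ, hρ⟩ := exists_approximation (R := R) M (LinearMap.ker π)
  let d₀ : (N →ₗ[R] M) →ₗ[Module.End R M] (Fin a → Module.End R M) :=
    { toFun := fun f j => f ∘ₗ π ∘ₗ LinearMap.single R (fun _ => M) j
      map_add' := fun f g => rfl
      map_smul' := fun r f => rfl }
  -- `τ k j` are the matrix entries of the composite `M^b → ker π → M^a`
  let τ : Fin b → Fin a → Module.End R M := fun k j =>
    LinearMap.proj j ∘ₗ (LinearMap.ker π).subtype ∘ₗ ρ ∘ₗ LinearMap.single R (fun _ => M) k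
  let d₁ : (Fin a → Module.End R M) →ₗ[Module.End R M] (Fin b → Module.End R M) :=
    { toFun := fun l k => ∑ j, l j * τ k j
      map_add' := fun f g => by ext k : 1; simp [add_mul, Finset.sum_add_distrib]
      map_smul' := fun r f => by ext k : 1; simp [mul_assoc, Finset.mul_sum] }
  refine hΛ _ _ _ d₀ d₁ inferInstance inferInstance ?_ ?_
  · intro f g hfg
    refine eq_of_comp_eq hJ π hπ ?_
    refine LinearMap.pi_ext' fun j => ?_
    exact congrFun hfg j
  · intro l
    -- `L : M^a → M` is the map with components `l`
    let L : (Fin a → M) →ₗ[R] M := LinearMap.lsum R (fun _ => M) R l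
    have hd₁ : ∀ k, d₁ l k = L ∘ₗ (LinearMap.ker π).subtype ∘ₗ ρ ∘ₗ
        LinearMap.single R (fun _ => M) k := by
      intro k; ext m
      simp [d₁, L, τ, LinearMap.lsum_apply]
    constructor
    · intro hl
      have hL : L ∘ₗ (LinearMap.ker π).subtype = 0 := by
        refine eq_of_comp_eq hJ ρ hρ (LinearMap.pi_ext' fun k => ?_)
        have := hd₁ k
        rw [hl] at this
        rw [LinearMap.zero_comp, LinearMap.zero_comp]
        exact this.symm
      have hker : LinearMap.ker π ≤ LinearMap.ker L := fun x hx =>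
        LinearMap.congr_fun hL ⟨x, hx⟩
      let L' : LinearMap.range π →ₗ[R] M :=
        (LinearMap.ker π).liftQ L hker ∘ₗ π.quotKerEquivRange.symm.toLinearMap
      obtain ⟨F, hF⟩ := hJ.exists_extension (LinearMap.range π).subtype
        (Submodule.subtype_injective _) (by simpa using hπ) L'
      refine ⟨F, ?_⟩
      ext j m
      have := LinearMap.congr_fun hF ⟨π (Pi.single j m), ⟨_, rfl⟩⟩
      refine Eq.trans this ?_
      simp only [L', LinearMap.comp_apply, LinearEquiv.coe_coe]
      rw [LinearMap.quotKerEquivRange_symm_apply_image π _ ⟨_, rfl⟩]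
      exact lsum_single a l j m
    · rintro ⟨f, rfl⟩
      have hL : L = f ∘ₗ π := by
        refine LinearMap.pi_ext' fun j => ?_
        ext m
        exact lsum_single a (d₀ f) j m
      ext k m
      rw [hd₁, hL]
      simp

theorem eq_zero_of_forall_hom_eq_zero [IsReflexive R M] [IsReflexive R N] [Nontrivial M] {n : N}
    (h : ∀ f : N →ₗ[R] M, f n = 0) : n = 0 := by
  obtain ⟨m, hm⟩ := exists_ne (0 : M)
  obtain ⟨g', hg'⟩ : ∃ g' : Dual R M, g' m ≠ 0 := by
    by_contra! hcon
    exact hm ((bijective_dual_eval R M).1 (by ext g; simpa using hcon g))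
  apply (bijective_dual_eval R N).1
  ext g
  have := congrArg g' (h (LinearMap.toSpanSingleton R M m ∘ₗ g))
  simpa [hg'] using this

/-- For `g ∈ M*` and `m ∈ M` the functional `h ↦ g (φ (h · m))` on `N*` is evaluation at a point
of `N`, and linearity of `φ` over `End_R(M)` shows that `g m • φ` is evaluation at this same
point. So `a • φ` is an evaluation for each `a` in the trace ideal, whence so is `φ`, as `N`
extends from the trace ideal. -/
theorem exists_eval_eq [IsReflexive R M] [IsReflexive R N] [Nontrivial M]
    (hJ : traceIdeal R M ≠ ⊥ ∧ ExtendsFrom (traceIdeal R M) R)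
    (φ : (N →ₗ[R] M) →ₗ[Module.End R M] M) : ∃ n : N, ∀ f, φ f = f n := by
  have hφ : ∀ (r : R) f, φ (r • f) = r • φ f := fun r f =>
    φ.map_smul (algebraMap R (Module.End R M) r) f
  have htl : ∀ m : M, (∀ g : Dual R M, g m = 0) → m = 0 := fun m hm => by
    apply (bijective_dual_eval R M).1
    ext g; simpa using hm g
  let φR : (N →ₗ[R] M) →ₗ[R] M :=
    { toFun := φ, map_add' := φ.map_add, map_smul' := hφ }
  let Ψ : N →ₗ[R] ((N →ₗ[R] M) →ₗ[R] M) := LinearMap.applyₗ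
  have hΨ : ∀ f, ∀ n, Ψ n f = f n := fun f n => rfl
  have hle : traceIdeal R M ≤ (LinearMap.range Ψ).comap
      (LinearMap.toSpanSingleton R _ φR) := by
    refine Ideal.span_le.2 ?_
    rintro _ ⟨g, m, rfl⟩
    let θ : Dual R (Dual R N) :=
      g ∘ₗ φR ∘ₗ LinearMap.llcomp R N R M (LinearMap.toSpanSingleton R M m)
    obtain ⟨n, hn⟩ := (bijective_dual_eval R N).2 θ
    refine ⟨n, ?_⟩
    ext f
    rw [hΨ, ← sub_eq_zero]
    refine htl _ fun g' => ?_
    have h1 : g' (f n) = g (φ (LinearMap.toSpanSingleton R M m ∘ₗ (g' ∘ₗ f))) :=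
      LinearMap.congr_fun hn (g' ∘ₗ f)
    have h2 : φ (LinearMap.toSpanSingleton R M m ∘ₗ (g' ∘ₗ f)) =
        LinearMap.toSpanSingleton R M m (g' (φ f)) :=
      φ.map_smul (LinearMap.toSpanSingleton R M m ∘ₗ g' : Module.End R M) f
    rw [map_sub, h1, h2]
    change g (g' (φ f) • m) - g' (g m • φ f) = 0
    simp [mul_comm]
  have hR : ExtendsFrom (traceIdeal R M) N := hJ.2.of_isReflexive
  have hinj : Function.Injective Ψ := by
    rw [injective_iff_map_eq_zero]
    intro n hn
    exact eq_zero_of_forall_hom_eq_zero fun f => LinearMap.congr_fun hn f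
  choose x hx using fun a : traceIdeal R M => hle a.2
  have hM : ExtendsFrom (traceIdeal R M) M := hJ.2.of_isReflexive
  obtain ⟨n, hn⟩ := hR.2
    { toFun := x
      map_add' := fun a b => hinj (by rw [map_add, hx, hx, hx]; simp [add_smul])
      map_smul' := fun r a => hinj (by rw [RingHom.id_apply, map_smul, hx, hx]; simp [mul_smul]) }
  refine ⟨n, fun f => ?_⟩
  rw [← sub_eq_zero]
  refine hM.1 _ fun a ha => ?_
  have h1 : x ⟨a, ha⟩ = a • n := hn ⟨a, ha⟩
  have h2 : f (x ⟨a, ha⟩) = a • φ f := LinearMap.congr_fun (hx ⟨a, ha⟩) f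
  rw [smul_sub, ← h2, h1, map_smul, sub_self]

theorem memAdd_of_kernelsProjective [IsNoetherianRing R] [Module.Finite R M] [Module.Finite R N]
    [IsReflexive R M] [IsReflexive R N] [Nontrivial M]
    (hJ : traceIdeal R M ≠ ⊥ ∧ ExtendsFrom (traceIdeal R M) R)
    (hΛ : KernelsProjective (Module.End R M)) : MemAdd R M N := by
  have hM : ExtendsFrom (traceIdeal R M) M := hJ.2.of_isReflexive
  have hproj := projective_hom (N := N) hM hΛ
  have : Module.Finite (Module.End R M) (N →ₗ[R] M) :=
    Module.Finite.of_restrictScalars_finite R _ _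
  obtain ⟨a, p, hp⟩ := Module.Finite.exists_fin' (Module.End R M) (N →ₗ[R] M)
  obtain ⟨c, hc⟩ := Module.projective_lifting_property p LinearMap.id hp
  -- a dual basis of the projective `Λ`-module `Hom_R(N, M)`: generators `y j`, coordinates `c · j`
  let y : Fin a → (N →ₗ[R] M) := fun j => p (Pi.single j 1)
  have hy : ∀ f : N →ₗ[R] M, f = ∑ j, c f j • y j := by
    intro f
    conv_lhs => rw [← LinearMap.id_apply (R := Module.End R M) f, ← hc, LinearMap.comp_apply]
    rw [LinearMap.pi_apply_eq_sum_univ p]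
    refine Finset.sum_congr rfl fun j _ => ?_
    congr 2
    ext k : 1
    simp [Pi.single_apply, eq_comm]
  let i : N →ₗ[R] (Fin a → M) := LinearMap.pi y
  let φ : (Fin a → M) → ((N →ₗ[R] M) →ₗ[Module.End R M] M) := fun m =>
    { toFun := fun f => ∑ j, c f j (m j)
      map_add' := fun f g => by simp [Finset.sum_add_distrib]
      map_smul' := fun r f => by simp }
  -- `r m` is the point at which `f ↦ ∑ j, c f j (m j)` is evaluation
  choose r hr using fun m => exists_eval_eq hJ (φ m)
  have uniq : ∀ m n, (∀ f : N →ₗ[R] M, ∑ j, c f j (m j) = f n) → r m = n := by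
    intro m n h
    rw [← sub_eq_zero]
    refine eq_zero_of_forall_hom_eq_zero (R := R) (M := M) fun f => ?_
    rw [map_sub, ← hr, ← h]
    exact sub_self _
  let ρ : (Fin a → M) →ₗ[R] N :=
    { toFun := r
      map_add' := fun m m' => uniq _ _ fun f => by
        rw [map_add, ← hr, ← hr]; simp [φ, Finset.sum_add_distrib]
      map_smul' := fun s m => uniq _ _ fun f => by
        rw [RingHom.id_apply, map_smul, ← hr]; simp [φ, Finset.smul_sum] }
  have hρ : ∀ n, ρ (i n) = n := fun n => uniq _ _ fun f => by
    conv_rhs => rw [hy f]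
    simp [i]
  refine ⟨a, ModuleCat.of R (LinearMap.ker ρ), ⟨?_⟩⟩
  refine LinearEquiv.ofBijective (LinearMap.coprod i (LinearMap.ker ρ).subtype) ⟨?_, fun m => ?_⟩
  · rw [injective_iff_map_eq_zero]
    rintro ⟨n, z⟩ h
    simp only [LinearMap.coprod_apply] at h
    have hz : ρ ((LinearMap.ker ρ).subtype z) = 0 := z.2
    have h1 := congrArg ρ h
    rw [map_add, hρ, hz, add_zero, map_zero] at h1
    subst h1
    rw [map_zero, zero_add] at h
    exact Prod.ext rfl (Subtype.ext h)
  · refine ⟨(ρ m, ⟨m - i (ρ m), ?_⟩), ?_⟩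
    · rw [LinearMap.mem_ker, map_sub, hρ, sub_self]
    · simp
end Main

/-! ### Depth two -/

section ExtLemmas
variable {k : Type*} [Ring k] {C : Type*} [Category* C] [Abelian C] [Linear k C]
  [EnoughProjectives C] {X : C}

theorem subsingleton_ext_succ_iff (P : ProjectiveResolution X) (Y : C) (n : ℕ) :
    Subsingleton ↥(((Ext k C (n + 1)).obj (Opposite.op X)).obj Y) ↔
      ∀ f : P.complex.X (n + 1) ⟶ Y, P.complex.d (n + 2) (n + 1) ≫ f = 0 →
        ∃ g : P.complex.X n ⟶ Y, P.complex.d (n + 1) n ≫ g = f := by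
  rw [← ModuleCat.isZero_iff_subsingleton, (P.isoExt (n + 1) Y).isZero_iff,
    ← HomologicalComplex.exactAt_iff_isZero_homology,
    HomologicalComplex.exactAt_iff' _ n (n + 1) (n + 2) (by simp) (by simp),
    ShortComplex.moduleCat_exact_iff]
  rfl

theorem subsingleton_ext_zero_iff (P : ProjectiveResolution X) (Y : C) :
    Subsingleton ↥(((Ext k C 0).obj (Opposite.op X)).obj Y) ↔
      ∀ f : P.complex.X 0 ⟶ Y, P.complex.d 1 0 ≫ f = 0 → f = 0 := by
  rw [← ModuleCat.isZero_iff_subsingleton, (P.isoExt 0 Y).isZero_iff,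
    ← HomologicalComplex.exactAt_iff_isZero_homology,
    HomologicalComplex.exactAt_iff' _ 0 0 1 (by simp) (by simp),
    ShortComplex.moduleCat_exact_iff]
  have h0 : P.complex.d 0 0 = 0 := P.complex.shape _ _ (by simp)
  -- in degree zero the incoming differential of the Hom complex is `d 0 0 = 0`
  refine forall_congr' fun f => imp_congr Iff.rfl ⟨?_, ?_⟩
  · rintro ⟨g, hg⟩
    have hg' : P.complex.d 0 0 ≫ g = f := hg
    rw [← hg', h0]
    exact Limits.zero_comp
  · rintro rfl
    exact ⟨0, map_zero _⟩
end ExtLemmas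

section Depth
open IsLocalRing
variable {R : Type u} [CommRing R] [IsLocalRing R]
  {P₀ P₁ P₂ N : Type u} [AddCommGroup P₀] [Module R P₀] [AddCommGroup P₁] [Module R P₁]
  [AddCommGroup P₂] [Module R P₂] [AddCommGroup N] [Module R N]

/-- For the start `P₂ → P₁ → P₀ → R/m` of a projective resolution, the right-hand side is the
vanishing of `Ext⁰(R/m, N)` and `Ext¹(R/m, N)`. -/
theorem extendsFrom_maximalIdeal_iff (d₂ : P₂ →ₗ[R] P₁) (d₁ : P₁ →ₗ[R] P₀)
    (ε : P₀ →ₗ[R] ResidueField R) [Module.Projective R P₀] (hε : Function.Surjective ε)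
    (h₁ : Function.Exact d₁ ε) (h₂ : Function.Exact d₂ d₁) :
    ExtendsFrom (maximalIdeal R) N ↔
      (∀ f : P₀ →ₗ[R] N, f ∘ₗ d₁ = 0 → f = 0) ∧
      (∀ f : P₁ →ₗ[R] N, f ∘ₗ d₂ = 0 → ∃ g : P₀ →ₗ[R] N, g ∘ₗ d₁ = f) := by
  have hm : ∀ a ∈ maximalIdeal R, ∀ p, a • p ∈ LinearMap.range d₁ := fun a ha p => by
    refine (h₁ _).1 ?_
    rw [map_smul, Algebra.smul_def, ResidueField.algebraMap_eq, (residue_eq_zero_iff a).2 ha,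
      zero_mul]
  constructor
  · intro h
    refine ⟨fun f hf => ?_, fun f hf => ?_⟩
    · ext p
      refine h.1 _ fun a ha => ?_
      obtain ⟨x, hx⟩ := hm a ha p
      rw [← map_smul, ← hx]
      exact LinearMap.congr_fun hf x
    · have hker : LinearMap.ker d₁ ≤ LinearMap.ker f := fun x hx => by
        obtain ⟨y, rfl⟩ := (h₂ x).1 hx
        exact LinearMap.congr_fun hf y
      obtain ⟨F, hF⟩ := h.exists_extension (LinearMap.range d₁).subtype
        (Submodule.subtype_injective _) (by simpa using hm)
        ((LinearMap.ker d₁).liftQ f hker ∘ₗ d₁.quotKerEquivRange.symm.toLinearMap)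
      refine ⟨F, ?_⟩
      ext x
      refine (LinearMap.congr_fun hF ⟨d₁ x, ⟨_, rfl⟩⟩).trans ?_
      simp only [LinearMap.comp_apply, LinearEquiv.coe_coe]
      rw [LinearMap.quotKerEquivRange_symm_apply_image d₁ _ ⟨_, rfl⟩]
      rfl
  · rintro ⟨H0, H1⟩
    -- `p` and the map `β` below are lifts `R → P₀` and `P₀ → R` of the identity of the residue field
    obtain ⟨p, hp⟩ := hε 1
    refine ⟨fun n hn => ?_, fun f => ?_⟩
    · let q : ResidueField R →ₗ[R] N := Submodule.liftQ (maximalIdeal R)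
        (LinearMap.toSpanSingleton R N n) (fun a ha => by simpa using hn a ha)
      have h0 : q ∘ₗ ε = 0 := H0 _ (by
        rw [LinearMap.comp_assoc, h₁.linearMap_comp_eq_zero, LinearMap.comp_zero])
      have h2 := LinearMap.congr_fun h0 p
      rw [LinearMap.comp_apply, hp] at h2
      have h3 : q 1 = (1 : R) • n := rfl
      rw [h3] at h2
      simpa using h2
    · obtain ⟨β, hβ⟩ := Module.projective_lifting_property (Algebra.linearMap R (ResidueField R)) ε
        residue_surjective
      have hβ' : ∀ x, residue R (β x) = ε x := fun x => LinearMap.congr_fun hβ x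
      let γ : P₁ →ₗ[R] maximalIdeal R := LinearMap.codRestrict _ (β ∘ₗ d₁) fun x => by
        rw [← residue_eq_zero_iff, LinearMap.comp_apply, hβ']
        exact h₁.apply_apply_eq_zero x
      obtain ⟨g, hg⟩ := H1 (f ∘ₗ γ) (by
        ext x
        have : γ (d₂ x) = 0 := Subtype.ext (by
          simp [γ, h₂.apply_apply_eq_zero x])
        simp [this])
      have hu : IsUnit (β p) := by
        rw [← residue_ne_zero_iff_isUnit, hβ', hp]; exact one_ne_zero
      obtain ⟨u, hu⟩ := hu
      refine ⟨(↑u⁻¹ : R) • g p, fun a => ?_⟩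
      obtain ⟨x, hx⟩ := hm a a.2 p
      have h3 : g (d₁ x) = f (γ x) := LinearMap.congr_fun hg x
      have h4 : γ x = β p • a := Subtype.ext (by simp [γ, hx, mul_comm])
      rw [hx, h4, map_smul, map_smul, ← hu] at h3
      rw [smul_comm, h3, smul_smul, Units.inv_mul, one_smul]

theorem isMCM_iff_extendsFrom (hdim : ringKrullDim R = 2) :
    IsMCM R N ↔ ExtendsFrom (maximalIdeal R) N := by
  obtain ⟨⟨P⟩⟩ := (inferInstance :
    HasProjectiveResolution (ModuleCat.of R (ResidueField R)))
  let ε : P.complex.X 0 ⟶ ModuleCat.of R (ResidueField R) := P.π.f 0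
  have e1 : Function.Surjective ε := (ModuleCat.epi_iff_surjective ε).1 (inferInstanceAs (Epi (P.π.f 0)))
  have e2 : Function.Exact (P.complex.d 1 0).hom ε.hom :=
    (ShortComplex.ShortExact.moduleCat_exact_iff_function_exact _).1 P.exact₀
  have e3 : Function.Exact (P.complex.d 2 1).hom (P.complex.d 1 0).hom :=
    (ShortComplex.ShortExact.moduleCat_exact_iff_function_exact _).1 (P.exact_succ 0)
  have : Module.Projective R (P.complex.X 0) :=
    (IsProjective.iff_projective _).2 (P.projective 0)
  rw [extendsFrom_maximalIdeal_iff (P.complex.d 2 1).hom (P.complex.d 1 0).hom ε.hom e1 e2 e3]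
  have h0 := subsingleton_ext_zero_iff (k := R) P (ModuleCat.of R N)
  have h1 := subsingleton_ext_succ_iff (k := R) P (ModuleCat.of R N) 0
  have hM : IsMCM R N ↔
    (Subsingleton ↥(((Ext R (ModuleCat.{u} R) 0).obj
        (Opposite.op (ModuleCat.of R (IsLocalRing.ResidueField R)))).obj (ModuleCat.of R N)) ∧
    Subsingleton ↥(((Ext R (ModuleCat.{u} R) (0 + 1)).obj
        (Opposite.op (ModuleCat.of R (IsLocalRing.ResidueField R)))).obj (ModuleCat.of R N))) := by
    have : IsMCM R N ↔ (2 : ℕ∞) ≤ moduleDepth R ‹_› N := by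
      rw [IsMCM, hdim]
      exact ⟨fun h => WithBot.coe_le_coe.1 (h _), fun h _ => WithBot.coe_le_coe.2 h⟩
    rw [this, moduleDepth, le_sInf_iff]
    constructor
    · intro h
      constructor
      · by_contra hc
        exact absurd (h 0 ⟨0, rfl, hc⟩) (by decide)
      · by_contra hc
        exact absurd (h 1 ⟨1, rfl, hc⟩) (by decide)
    · rintro ⟨h0, h1⟩ _ ⟨j, rfl, hj⟩
      have : 2 ≤ j := by
        by_contra! hlt
        interval_cases j
        · exact hj h0
        · exact hj h1
      exact_mod_cast this
  rw [hM, h0, h1]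
  refine and_congr ⟨fun h f hf => ?_, fun h f hf => ?_⟩ ⟨fun h f hf => ?_, fun h f hf => ?_⟩
  · exact congrArg ModuleCat.Hom.hom (h (ModuleCat.ofHom f) (ModuleCat.hom_ext hf))
  · exact ModuleCat.hom_ext (h f.hom (congrArg ModuleCat.Hom.hom hf))
  · obtain ⟨g, hg⟩ := h (ModuleCat.ofHom f) (ModuleCat.hom_ext hf)
    exact ⟨g.hom, congrArg ModuleCat.Hom.hom hg⟩
  · obtain ⟨g, hg⟩ := h f.hom (congrArg ModuleCat.Hom.hom hf)
    exact ⟨ModuleCat.ofHom g, ModuleCat.hom_ext hg⟩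
end Depth

/-! ### Global dimension two -/

section GlobalDimension
variable {Λ : Type u} [Ring Λ]

theorem projectiveDimension_shift {A B C : Type u} [AddCommGroup A] [Module Λ A]
    [AddCommGroup B] [Module Λ B] [AddCommGroup C] [Module Λ C] [Module.Projective Λ B]
    (i : A →ₗ[Λ] B) (p : B →ₗ[Λ] C) (hi : Function.Injective i) (hp : Function.Surjective p)
    (h : Function.Exact i p) (n : ℕ) :
    HasProjectiveDimensionLT (ModuleCat.of Λ C) (n + 2) ↔
      HasProjectiveDimensionLT (ModuleCat.of Λ A) (n + 1) := by
  let S : ShortComplex (ModuleCat.{u} Λ) := ShortComplex.mk (ModuleCat.ofHom i) (ModuleCat.ofHom p)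
    (ModuleCat.hom_ext h.linearMap_comp_eq_zero)
  have hS : S.ShortExact :=
    { exact := (ShortComplex.ShortExact.moduleCat_exact_iff_function_exact S).2 h
      mono_f := (ModuleCat.mono_iff_injective _).2 hi
      epi_g := (ModuleCat.epi_iff_surjective _).2 hp }
  exact hS.hasProjectiveDimensionLT_X₃_iff n ((IsProjective.iff_projective B).1 inferInstance)

theorem exact_subtype_rangeRestrict {A B C : Type*} [AddCommGroup A] [Module Λ A]
    [AddCommGroup B] [Module Λ B] [AddCommGroup C] [Module Λ C] {f : A →ₗ[Λ] B} {g : B →ₗ[Λ] C}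
    (h : Function.Exact f g) :
    Function.Exact (LinearMap.range f).subtype g.rangeRestrict := by
  intro x
  simpa [Subtype.ext_iff] using h x

/-- The vanishing of `Ext³(C, -)` on the third syzygy splits off the second syzygy, which is
therefore projective. This passes from the derived-functor `Ext` of `GlobalDimLE` to the
projective dimension. -/
theorem hasProjectiveDimensionLT_of_globalDimLE (h : GlobalDimLE Λ 2) (C : ModuleCat.{u} Λ) :
    HasProjectiveDimensionLT C 3 := by
  obtain ⟨⟨P⟩⟩ := (inferInstance : HasProjectiveResolution C)
  have hex : ∀ n, Function.Exact (P.complex.d (n + 2) (n + 1)).hom (P.complex.d (n + 1) n).hom :=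
    fun n => (ShortComplex.ShortExact.moduleCat_exact_iff_function_exact _).1 (P.exact_succ n)
  have hproj : ∀ n, Module.Projective Λ (P.complex.X n) :=
    fun n => (IsProjective.iff_projective _).2 (P.projective n)
  let ε : P.complex.X 0 ⟶ C := P.π.f 0
  have e1 : Function.Surjective ε :=
    (ModuleCat.epi_iff_surjective ε).1 (inferInstanceAs (Epi (P.π.f 0)))
  have e2 : Function.Exact (P.complex.d 1 0).hom ε.hom :=
    (ShortComplex.ShortExact.moduleCat_exact_iff_function_exact _).1 P.exact₀
  refine (projectiveDimension_shift (C := C) (LinearMap.range (P.complex.d 1 0).hom).subtype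
    ε.hom (Submodule.subtype_injective _) e1 (fun x => by simpa using e2 x) 1).2 ?_
  refine (projectiveDimension_shift _ _ (Submodule.subtype_injective _)
    (LinearMap.surjective_rangeRestrict _) (exact_subtype_rangeRestrict (hex 0)) 0).2 ?_
  let d₃ := (P.complex.d 3 2).hom
  let d₂ := (P.complex.d 2 1).hom
  have hex1 : Function.Exact d₃ d₂ := hex 1
  obtain ⟨g, hg⟩ := (subsingleton_ext_succ_iff P (ModuleCat.of Λ (LinearMap.range d₃)) 2).1
    (h C _) (ModuleCat.ofHom d₃.rangeRestrict) (by
      ext x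
      exact (hex 2).apply_apply_eq_zero x)
  have hg' : ∀ x, g.hom (d₃ x) = d₃.rangeRestrict x := fun x =>
    LinearMap.congr_fun (congrArg ModuleCat.Hom.hom hg) x
  -- `id - g` kills the third syzygy, so it induces a section `s` of `P₂ → range d₂`
  let t : P.complex.X 2 →ₗ[Λ] P.complex.X 2 :=
    LinearMap.id - (LinearMap.range d₃).subtype ∘ₗ g.hom
  have ht : LinearMap.ker d₂ ≤ LinearMap.ker t := by
    intro x hx
    obtain ⟨y, rfl⟩ := (hex1 x).1 hx
    simp [t, hg']
  let s : LinearMap.range d₂ →ₗ[Λ] P.complex.X 2 :=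
    (LinearMap.ker d₂).liftQ t ht ∘ₗ d₂.quotKerEquivRange.symm.toLinearMap
  have hs : d₂.rangeRestrict ∘ₗ s = LinearMap.id := by
    ext ⟨_, x, rfl⟩
    simp only [s, LinearMap.comp_apply, LinearEquiv.coe_coe]
    rw [LinearMap.quotKerEquivRange_symm_apply_image d₂ _ ⟨_, rfl⟩]
    obtain ⟨y, hy⟩ := (g.hom x).2
    simp [t, ← hy, hex1.apply_apply_eq_zero]
  have : Module.Projective Λ (LinearMap.range d₂) := Module.Projective.of_split s _ hs
  have : Projective (ModuleCat.of Λ (LinearMap.range d₂)) :=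
    (IsProjective.iff_projective _).1 this
  exact (inferInstance : HasProjectiveDimensionLT (ModuleCat.of Λ (LinearMap.range d₂)) 1)

/-- The kernel `X` of `d : P₀ → P₁` is a second syzygy of the cokernel of `d`. -/
theorem kernelsProjective_of_globalDimLE (h : GlobalDimLE Λ 2) : KernelsProjective Λ := by
  intro X P₀ P₁ _ _ _ _ _ _ i d _ _ hi hid
  have h3 := hasProjectiveDimensionLT_of_globalDimLE h (ModuleCat.of Λ (P₁ ⧸ LinearMap.range d))
  have h2 := (projectiveDimension_shift (LinearMap.range d).subtype (LinearMap.range d).mkQ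
    (Submodule.subtype_injective _) (Submodule.mkQ_surjective _)
    (fun x => by simp) 1).1 h3
  have h1 := (projectiveDimension_shift i d.rangeRestrict hi
    (LinearMap.surjective_rangeRestrict _) (fun x => by simpa [Subtype.ext_iff] using hid x) 0).1 h2
  exact (IsProjective.iff_projective X).2 (projective_iff_hasProjectiveDimensionLT_one.2 h1)

theorem KernelsProjective.of_ringEquiv {Λ' : Type u} [Ring Λ'] (e : Λ ≃+* Λ')
    (h : KernelsProjective Λ') : KernelsProjective Λ := by
  intro X P₀ P₁ _ _ _ _ _ _ i d h₀ h₁ hi hid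
  let : Module Λ' X := Module.compHom X (e.symm : Λ' →+* Λ)
  let : Module Λ' P₀ := Module.compHom P₀ (e.symm : Λ' →+* Λ)
  let : Module Λ' P₁ := Module.compHom P₁ (e.symm : Λ' →+* Λ)
  let := RingHomInvPair.of_ringEquiv e
  let := RingHomInvPair.of_ringEquiv e.symm
  have key : ∀ (Y : Type u) [AddCommGroup Y] [Module Λ Y] [Module Λ' Y],
      (∀ (r : Λ) (y : Y), (e r) • y = r • y) → (Module.Projective Λ Y ↔ Module.Projective Λ' Y) := by
    intro Y _ _ _ hY
    let E : Y ≃ₛₗ[(e : Λ →+* Λ')] Y :=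
      { AddEquiv.refl Y with map_smul' := fun r y => (hY r y).symm }
    exact ⟨fun _ => Module.Projective.of_equiv E, fun _ => Module.Projective.of_equiv E.symm⟩
  have hc : ∀ (Y : Type u) [AddCommGroup Y] [Module Λ Y] (r : Λ) (y : Y),
      (e.symm (e r)) • y = r • y := fun Y _ _ r y => by rw [e.symm_apply_apply]
  refine (key X fun r y => hc X r y).2 (h X P₀ P₁
    { i with map_smul' := fun r x => i.map_smul (e.symm r) x }
    { d with map_smul' := fun r x => d.map_smul (e.symm r) x }
    ((key P₀ fun r y => hc P₀ r y).1 h₀) ((key P₁ fun r y => hc P₁ r y).1 h₁) hi hid)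

theorem globalDimLE_of_globalDim_eq {d : ℕ} (h : globalDim Λ = d) : GlobalDimLE Λ d := by
  have hne : {d : ℕ∞ | ∃ k : ℕ, d = (k : ℕ∞) ∧ GlobalDimLE Λ k}.Nonempty := by
    by_contra hc
    rw [Set.not_nonempty_iff_eq_empty] at hc
    rw [globalDim, hc, sInf_empty] at h
    exact ENat.natCast_ne_top d h.symm
  obtain ⟨k, hk, hk'⟩ := csInf_mem hne
  have : k = d := by
    have h2 : (k : ℕ∞) = d := hk.symm.trans h
    exact_mod_cast h2
  exact this ▸ hk'

/-- The order is unchanged by localising at the maximal ideal, so the NCCR condition at that prime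
says that `End_R(M)` itself has global dimension `dim R = 2`. -/
theorem kernelsProjective_end {R : Type u} [CommRing R] [IsLocalRing R]
    (hdim : ringKrullDim R = 2) {M : Type u} [AddCommGroup M] [Module R M]
    (hM : GivesNCCR R M) : KernelsProjective (Module.End R M) := by
  let m := IsLocalRing.maximalIdeal R
  obtain ⟨-, -, -, -, -, h⟩ := hM
  have hgl := h ⟨m, inferInstance⟩
  let e : R ≃ₐ[R] Localization.AtPrime m :=
    IsLocalization.atUnits R m.primeCompl (fun x hx => by
      simpa [m, Ideal.primeCompl, IsUnit.mem_submonoid_iff] using hx)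
  have hd : ringKrullDim (Localization.AtPrime m) = 2 := by
    rw [← ringKrullDim_eq_of_ringEquiv e.toRingEquiv, hdim]
  have hgl2 : globalDim (Localization.AtPrime m ⊗[R] Module.End R M) = (2 : ℕ) := by
    have := hgl.trans hd
    exact WithBot.coe_injective this
  let E : Localization.AtPrime m ⊗[R] Module.End R M ≃ₐ[R] Module.End R M :=
    (Algebra.TensorProduct.congr e.symm AlgEquiv.refl).trans (Algebra.TensorProduct.lid R _)
  exact (kernelsProjective_of_globalDimLE (globalDimLE_of_globalDim_eq hgl2)).of_ringEquiv
    E.symm.toRingEquiv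
end GlobalDimension

/-- Let `R` be a 2-dimensional complete Noetherian local normal domain
containing an algebraically closed field of characteristic zero, and suppose `R` has an
NCCR. Then any finitely generated reflexive `R`-module `M` giving an NCCR of `R` is an
additive generator of the category of maximal Cohen-Macaulay `R`-modules: a finitely
generated `R`-module `N` is maximal Cohen-Macaulay if and only if `N ∈ add_R M`. -/
theorem NCCR_module_is_additive_generator_of_CM
    (R : Type u) [CommRing R] [IsNoetherianRing R] [IsDomain R] [IsIntegrallyClosed R]
    [IsLocalRing R] [IsAdicComplete (IsLocalRing.maximalIdeal R) R]
    (hdim : ringKrullDim R = 2)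
    (k : Type u) [Field k] [IsAlgClosed k] [CharZero k] [Algebra k R]
    (hR : HasNCCR R)
    (M : Type u) [AddCommGroup M] [Module R M] [Module.Finite R M]
    (hrefl : Module.IsReflexive R M)
    (hM : GivesNCCR R M) :
    ∀ N : ModuleCat.{u} R, Module.Finite R ↥N → (IsMCM R ↥N ↔ MemAdd R M ↥N) := by
  intro N hN
  have hN' := isMCM_iff_extendsFrom (R := R) (N := N) hdim
  rw [hN']
  have hmR := extendsFrom_maximalIdeal hdim
  have : Nontrivial M := hM.2.2.1
  constructor
  · intro h
    have : IsReflexive R N := isReflexive_of_extendsFrom hdim h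
    exact memAdd_of_kernelsProjective (extendsFrom_traceIdeal M) (kernelsProjective_end hdim hM)
  · rintro ⟨a, P, ⟨e⟩⟩
    have h : ExtendsFrom (IsLocalRing.maximalIdeal R) M := hmR.of_isReflexive
    exact h.pi.of_retract (e.toLinearMap ∘ₗ LinearMap.inl R N P)
      (LinearMap.fst R N P ∘ₗ e.symm.toLinearMap) (fun x => by simp)
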